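/- Let f_i : R^d → R be L-smooth, let γ ∈ (0, 1/(2L)], let T ≥ 1, let x^k ∈ R^d, and define the local GD operator T_i(x^k) = x^k − (γ/T)∑_{j=0}^{T−1} ∇f_i(x_i^{k,j}), where x_i^{k,0} = x^k and x_i^{k,j+1} = x_i^{k,j} − (γ/T)∇f_i(x_i^{k,j}). Then ‖(x^k − γ∇f_i(x^k)) − T_i(x^k)‖ ≤ 2Lγ²‖∇f_i(x^k)‖. -/

import Mathlib

/-! With step `γ/T`, every local iterate `y⁽ʲ⁾`, `j ≤ T`, stays within `2(γ/T)j‖g(y)‖ ≤ 2γ‖g(y)‖`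
of its starting point (`norm_gdSeq_sub_le`): as long as this holds, the Lipschitz bound and
`Lγ ≤ 1/2` give `‖g(y⁽ʲ⁾)‖ ≤ ‖g(y)‖ + L·2γ‖g(y)‖ ≤ 2‖g(y)‖`, so each step has length at most
`2(γ/T)‖g(y)‖`. The difference between the full gradient step and the local operator is
`(γ/T) ∑_{j<T} (g(y⁽ʲ⁾) - g(y))`, whose `T` summands each have norm at most `L·2γ‖g(y)‖`. -/

open Finset

/-- Local gradient-descent sequence starting at `y`:
`y⁽⁰⁾ = y`, `y⁽ʲ⁺¹⁾ = y⁽ʲ⁾ − (γ/T)·g(y⁽ʲ⁾)`. -/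
noncomputable def gdSeq {d : ℕ}
    (g : EuclideanSpace ℝ (Fin d) → EuclideanSpace ℝ (Fin d)) (γ : ℝ) (T : ℕ)
    (y : EuclideanSpace ℝ (Fin d)) : ℕ → EuclideanSpace ℝ (Fin d)
  | 0 => y
  | j + 1 => gdSeq g γ T y j - (γ / (T : ℝ)) • g (gdSeq g γ T y j)

/-- Local GD operator `T_i(y) = y − (γ/T) ∑_{j<T} g(y⁽ʲ⁾)`. -/
noncomputable def gdOp {d : ℕ}
    (g : EuclideanSpace ℝ (Fin d) → EuclideanSpace ℝ (Fin d)) (γ : ℝ) (T : ℕ)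
    (y : EuclideanSpace ℝ (Fin d)) : EuclideanSpace ℝ (Fin d) :=
  y - (γ / (T : ℝ)) • ∑ j ∈ Finset.range T, g (gdSeq g γ T y j)

/-- The drift of the local iterates grows at most linearly in the number of steps. -/
lemma norm_gdSeq_sub_le {d : ℕ}
    (g : EuclideanSpace ℝ (Fin d) → EuclideanSpace ℝ (Fin d))
    (L γ : ℝ) (T : ℕ) (hL : 0 < L) (hγ : 0 < γ) (hLγ : L * γ ≤ 1 / 2) (hT : 1 ≤ T)
    (hlip : ∀ x y, ‖g x - g y‖ ≤ L * ‖x - y‖)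
    (y : EuclideanSpace ℝ (Fin d)) (j : ℕ) (hj : j ≤ T) :
    ‖gdSeq g γ T y j - y‖ ≤ 2 * (γ / T * j) * ‖g y‖ := by
  have hT0 : (0 : ℝ) < T := by exact_mod_cast hT
  induction j with
  | zero => simp [gdSeq]
  | succ j ih =>
    have ih := ih (by omega)
    set z := gdSeq g γ T y j with hz
    have hjT : (j : ℝ) ≤ T := by exact_mod_cast (by omega : j ≤ T)
    have hG := norm_nonneg (g y)
    have ha : 0 < γ / T := by positivity
    have haj : γ / T * j ≤ γ := by
      calc γ / T * j ≤ γ / T * T := by gcongr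
        _ = γ := by field_simp
    have hdrift : L * ‖z - y‖ ≤ ‖g y‖ := by
      calc L * ‖z - y‖ ≤ L * (2 * (γ / T * j) * ‖g y‖) := by gcongr
        _ ≤ L * (2 * γ * ‖g y‖) := by gcongr
        _ = 2 * (L * γ) * ‖g y‖ := by ring
        _ ≤ 2 * (1 / 2) * ‖g y‖ := by gcongr
        _ = ‖g y‖ := by ring
    have hg : ‖g z‖ ≤ 2 * ‖g y‖ := by
      have h1 := norm_le_norm_add_norm_sub' (g z) (g y)
      linarith [hlip z y]
    calc ‖gdSeq g γ T y (j + 1) - y‖ = ‖(z - y) - (γ / T) • g z‖ := by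
          rw [gdSeq, ← hz, sub_right_comm]
      _ ≤ ‖z - y‖ + γ / T * ‖g z‖ := by
          refine (norm_sub_le _ _).trans_eq ?_
          rw [norm_smul, Real.norm_of_nonneg ha.le]
      _ ≤ 2 * (γ / T * j) * ‖g y‖ + γ / T * (2 * ‖g y‖) := by gcongr
      _ = 2 * (γ / T * ((j + 1 : ℕ) : ℝ)) * ‖g y‖ := by push_cast; ring

/-- the local GD operator is close to a single full gradient step. -/
theorem stmt11 {d : ℕ} (fi : EuclideanSpace ℝ (Fin d) → ℝ)
    (g : EuclideanSpace ℝ (Fin d) → EuclideanSpace ℝ (Fin d))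
    (L γ : ℝ) (T : ℕ) (hL : 0 < L) (hγ : 0 < γ) (hγle : γ ≤ 1 / (2 * L))
    (hT : 1 ≤ T)
    (hgrad : ∀ x, HasGradientAt fi (g x) x)
    (hlip : ∀ x y, ‖g x - g y‖ ≤ L * ‖x - y‖)
    (xk : EuclideanSpace ℝ (Fin d)) :
    ‖(xk - γ • g xk) - gdOp g γ T xk‖ ≤ 2 * L * γ ^ 2 * ‖g xk‖ := by
  have hT0 : (0 : ℝ) < T := by exact_mod_cast hT
  have ha : 0 < γ / T := by positivity
  have hLγ : L * γ ≤ 1 / 2 := by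
    rw [le_div_iff₀ (by positivity)] at hγle
    linarith
  have hterm : ∀ j ∈ Finset.range T,
      ‖g (gdSeq g γ T xk j) - g xk‖ ≤ L * (2 * γ * ‖g xk‖) := by
    intro j hj
    have hj' : j ≤ T := (Finset.mem_range.mp hj).le
    have hjT : (j : ℝ) ≤ T := by exact_mod_cast hj'
    have haj : γ / T * j ≤ γ := by
      calc γ / T * j ≤ γ / T * T := by gcongr
        _ = γ := by field_simp
    calc _ ≤ L * ‖gdSeq g γ T xk j - xk‖ := hlip _ _
      _ ≤ L * (2 * (γ / T * j) * ‖g xk‖) := by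
          gcongr
          exact norm_gdSeq_sub_le g L γ T hL hγ hLγ hT hlip xk j hj'
      _ ≤ L * (2 * γ * ‖g xk‖) := by gcongr
  have heq : (xk - γ • g xk) - gdOp g γ T xk
      = (γ / (T : ℝ)) • ∑ j ∈ Finset.range T, (g (gdSeq g γ T xk j) - g xk) := by
    rw [gdOp, Finset.sum_sub_distrib, Finset.sum_const, Finset.card_range, smul_sub,
      ← Nat.cast_smul_eq_nsmul ℝ, smul_smul, div_mul_cancel₀ _ hT0.ne']
    abel
  rw [heq, norm_smul, Real.norm_of_nonneg ha.le]
  calc _ ≤ γ / T * ∑ j ∈ Finset.range T, L * (2 * γ * ‖g xk‖) := by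
        gcongr
        exact norm_sum_le_of_le _ hterm
    _ = 2 * L * γ ^ 2 * ‖g xk‖ := by
        rw [Finset.sum_const, Finset.card_range, nsmul_eq_mul]
        field_simp
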